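/- Let A be a 2n×2n matrix over F with A ∈ F_{I,J}, where I = diag(I₁, I₂), J = diag(J₁, J₂), and I₁, I₂, J₁, J₂ ∈ D_n. Partition A into n×n blocks A₁₁, A₁₂, A₂₁, A₂₂. Suppose (L₁₁, E₁₁, U₁₁) is an LEU-decomposition of A₁₁ ∈ F_{I₁,J₁}. Set I₁₁ = E₁₁E₁₁ᵀ, J₁₁ = E₁₁ᵀE₁₁, Q = L₁₁A₁₂, B = A₂₁U₁₁, A¹₂₁ = B(𝟙 − J₁₁), A¹₁₂ = (𝟙 − I₁₁)Q, A¹₂₂ = A₂₂ − B E₁₁ᵀ Q. Suppose (L₁₂, E₁₂, U₁₂) is an LEU-decomposition of A¹₁₂ ∈ F_{I₁(𝟙−I₁₁), J₂} and (L₂₁, E₂₁, U₂₁) is an LEU-decomposition of A¹₂₁ ∈ F_{I₂, J₁(𝟙−J₁₁)}. Set I₂₁ = E₂₁E₂₁ᵀ, J₁₂ = E₁₂ᵀE₁₂, G = L₂₁A¹₂₂U₁₂, A²₂₂ = (𝟙 − I₂₁)G(𝟙 − J₁₂), and let (L₂₂, E₂₂, U₂₂) be an LEU-decomposition of A²₂₂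 ∈ F_{I₂(𝟙−I₂₁), J₂(𝟙−J₁₂)}. Define W = G E₁₂ᵀ L₁₂ + L₂₁ B E₁₁ᵀ, V = U₂₁ E₂₁ᵀ G (𝟙 − J₁₂) + E₁₁ᵀ Q U₁₂, and the block matrices L = [[L₁₂L₁₁, 0],[−L₂₂WL₁₁, L₂₂L₂₁]], U = [[U₁₁U₂₁, −U₁₁VU₂₂],[0, U₁₂U₂₂]], E = [[E₁₁, E₁₂],[E₂₁, E₂₂]]. Then (L, E, U) is an LEU-decomposition of A ∈ F_{I,J}: L is invertible lower triangular, U is upper unitriangular, E ∈ P_{2n}, LAU = E, L − (𝟙 − I_E) ∈ F_{I, I_E}, and U − (𝟙 − J_E) ∈ F_{J_E, J}. -/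

import Mathlib

open Matrix

/-- `P_n`: matrices all of whose entries lie in `{0,1}`, with at most one nonzero
entry in each row and at most one nonzero entry in each column. -/
def InP {F : Type*} [Field F] {m : Type*} (E : Matrix m m F) : Prop :=
  (∀ i j, E i j = 0 ∨ E i j = 1) ∧
  (∀ i j k, E i j ≠ 0 → E i k ≠ 0 → j = k) ∧
  (∀ i j k, E i j ≠ 0 → E k j ≠ 0 → i = k)

/-- `D_n`: diagonal matrices with diagonal entries in `{0,1}`. -/
def InD {F : Type*} [Field F] {m : Type*} (M : Matrix m m F) : Prop :=
  M.IsDiag ∧ ∀ i, M i i = 0 ∨ M i i = 1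

/-- `F_{I,J}`: the set of matrices `B` with `I * B * J = B`. -/
def InFIJ {F : Type*} [Field F] {n : ℕ} (I J B : Matrix (Fin n) (Fin n) F) : Prop :=
  I * B * J = B

/-- `(L, E, U)` is an LEU-decomposition of `A ∈ F_{I,J}`: `A = L⁻¹ * E * U⁻¹`,
`E ∈ P_n`, `L` is an invertible lower triangular matrix, `U` is an upper
triangular matrix with unit diagonal, `L - (𝟙 - I_E) ∈ F_{I, I_E}` and
`U - (𝟙 - J_E) ∈ F_{J_E, J}`, where `I_E = E * Eᵀ` and `J_E = Eᵀ * E`. -/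
def IsLEU {F : Type*} [Field F] {n : ℕ}
    (I J A L E U : Matrix (Fin n) (Fin n) F) : Prop :=
  A = L⁻¹ * E * U⁻¹ ∧ InP E ∧ IsUnit L ∧
  (∀ i j : Fin n, i < j → L i j = 0) ∧
  (∀ i j : Fin n, j < i → U i j = 0) ∧ (∀ i, U i i = 1) ∧
  InFIJ I (E * Eᵀ) (L - (1 - E * Eᵀ)) ∧
  InFIJ (Eᵀ * E) J (U - (1 - Eᵀ * E))

/-- A `2n×2n` matrix built from four `n×n` blocks, indexed by `Fin (n+n)`. -/
def blk {F : Type*} [Field F] {n : ℕ} (A B C D : Matrix (Fin n) (Fin n) F) :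
    Matrix (Fin (n + n)) (Fin (n + n)) F :=
  (Matrix.fromBlocks A B C D).submatrix finSumFinEquiv.symm finSumFinEquiv.symm

/-!
With `P = E * Eᵀ` and `I * P = P`, the condition `L - (1 - P) ∈ F_{I,P}` says the same as
`L - 1 ∈ F_{I,P}`, and the `L` of this kind form a monoid; likewise for `U`. So it suffices to
write `L` and `U` as products of elementary block factors lying in these monoids. They come from
five rounds of block elimination, each multiplying on the left and on the right:

  `[[A₁₁, A₁₂], [A₂₁, A₂₂]]`
    `↦ [[E₁₁, Q], [B, A₂₂]]` by `diag(L₁₁, 1)` and `diag(U₁₁, 1)`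
    `↦ [[E₁₁, A'₁₂], [A'₂₁, A'₂₂]]` by transvections with the pivot `E₁₁`
    `↦ [[E₁₁, E₁₂], [E₂₁, G]]` by `diag(L₁₂, L₂₁)` and `diag(U₂₁, U₁₂)`
    `↦ [[E₁₁, E₁₂], [E₂₁, A''₂₂]]` by transvections with the pivots `E₁₂` and `E₂₁`
    `↦ [[E₁₁, E₁₂], [E₂₁, E₂₂]]` by `diag(1, L₂₂)` and `diag(1, U₂₂)`.

No round disturbs the blocks already reduced, because the blocks `E_ij` in one row have disjoint
row supports and those in one column have disjoint column supports.
-/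

section OneAddCorner

variable {R : Type*} [Ring R] {p q p' q' x y : R}

theorem mul_mul_eq_self_iff (hp : IsIdempotentElem p) (hq : IsIdempotentElem q) :
    p * x * q = x ↔ p * x = x ∧ x * q = x := by
  refine ⟨fun h => ⟨?_, ?_⟩, fun ⟨hpx, hxq⟩ => by rw [hpx, hxq]⟩
  · rw [← h, mul_assoc p x q, ← mul_assoc, hp.eq]
  · rw [← h, mul_assoc, hq.eq]

/-- The multiplicative monoid of all `1 + c` with `c = p * c = c * q`, that is, with `c ∈ pRq` when
`p` and `q` are idempotent. -/
def oneAddCorner (p q : R) : Submonoid R where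
  carrier := {x | p * (x - 1) = x - 1 ∧ (x - 1) * q = x - 1}
  one_mem' := by simp
  mul_mem' := by
    rintro x y ⟨hpx, hxq⟩ ⟨hpy, hyq⟩
    constructor
    · linear_combination (norm := noncomm_ring) hpx * y + hpy
    · linear_combination (norm := noncomm_ring) x * hyq + hxq

theorem mem_oneAddCorner_iff :
    x ∈ oneAddCorner p q ↔ p * (x - 1) = x - 1 ∧ (x - 1) * q = x - 1 :=
  Iff.rfl

theorem oneAddCorner_mono (hp : p * p' = p') (hq : q' * q = q') :
    oneAddCorner p' q' ≤ oneAddCorner p q := by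
  rintro x ⟨hpx, hxq⟩
  exact ⟨by rw [← hpx, ← mul_assoc, hp], by rw [← hxq, mul_assoc, hq]⟩

theorem oneAddCorner_mul_eq_self (hx : x ∈ oneAddCorner p q) (hy : q * y = 0) :
    x * y = y := by
  linear_combination (norm := noncomm_ring) (x - 1) * hy - hx.2 * y

theorem mul_oneAddCorner_eq_self (hx : x ∈ oneAddCorner p q) (hy : y * p = 0) :
    y * x = y := by
  linear_combination (norm := noncomm_ring) hy * (x - 1) - y * hx.1

theorem left_mul_mul_eq_of_mem_oneAddCorner (hx : x ∈ oneAddCorner p q) (hy : p * y = y) :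
    p * (x * y) = x * y := by
  linear_combination (norm := noncomm_ring) hx.1 * y + hy

theorem mul_mul_right_eq_of_mem_oneAddCorner (hx : x ∈ oneAddCorner p q) (hy : y * q = y) :
    y * x * q = y * x := by
  linear_combination (norm := noncomm_ring) y * hx.2 + hy

theorem left_mul_mul_eq_of_mul_sub_mul_eq {r : R} (hp : IsIdempotentElem p) (hpr : Commute p r)
    (hx : p * (x - (1 - r)) * q = x - (1 - r)) (hy : p * y = y) : p * (x * y) = x * y := by
  have hpx : p * (x - (1 - r)) = x - (1 - r) := by
    rw [← hx, ← mul_assoc, ← mul_assoc, hp.eq]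
  linear_combination (norm := noncomm_ring) hpx * y - hpr.eq * y + (1 - r) * hy

theorem mul_mul_right_eq_of_mul_sub_mul_eq {r : R} (hq : IsIdempotentElem q) (hrq : Commute r q)
    (hx : p * (x - (1 - r)) * q = x - (1 - r)) (hy : y * q = y) : y * x * q = y * x := by
  have hxq : (x - (1 - r)) * q = x - (1 - r) := by
    rw [← hx, mul_assoc, hq.eq]
  linear_combination (norm := noncomm_ring) y * hxq - y * hrq.eq + hy * (1 - r)

theorem mem_oneAddCorner_iff_mul_sub_mul_eq {r : R} (hp : IsIdempotentElem p)
    (hq : IsIdempotentElem q) (hpr : p * r = r) (hrq : r * q = r) :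
    x ∈ oneAddCorner p q ↔ p * (x - (1 - r)) * q = x - (1 - r) := by
  have hr : p * r * q = r := by rw [hpr, hrq]
  rw [mem_oneAddCorner_iff, ← mul_mul_eq_self_iff hp hq,
    show x - (1 - r) = (x - 1) + r by abel, mul_add, add_mul, hr, add_left_inj]

end OneAddCorner

section TriangularMatrices

theorem mul_apply_self_of_isUpperTriangular {m R : Type*} [Fintype m] [LinearOrder m] [Semiring R]
    {M N : Matrix m m R} (hM : M.IsUpperTriangular) (hN : N.IsUpperTriangular) (i : m) :
    (M * N) i i = M i i * N i i := by
  rw [mul_apply, Finset.sum_eq_single i _ (by simp)]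
  intro k _ hki
  rcases hki.lt_or_gt with hlt | hgt
  · rw [hM hlt, zero_mul]
  · rw [hN hgt, mul_zero]

theorem isUnit_of_isUpperTriangular_of_apply_self_eq_one {m R : Type*} [Fintype m] [LinearOrder m]
    [CommRing R] {M : Matrix m m R} (hM : M.IsUpperTriangular) (hdiag : ∀ i, M i i = 1) :
    IsUnit M := by
  simp [isUnit_iff_isUnit_det, det_of_isUpperTriangular hM, hdiag]

theorem eq_inv_mul_mul_inv_iff {m R : Type*} [Fintype m] [DecidableEq m] [CommRing R]
    {L A E U : Matrix m m R} (hL : IsUnit L) (hU : IsUnit U) :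
    A = L⁻¹ * E * U⁻¹ ↔ L * A * U = E := by
  have := hL.invertible
  have := hU.invertible
  rw [eq_comm, mul_inv_eq_iff_eq_mul_of_invertible, inv_mul_eq_iff_eq_mul_of_invertible,
    eq_comm, mul_assoc]

end TriangularMatrices

section ZeroOneMatrices

variable {F m : Type*} [Field F]

theorem InP.transpose {E : Matrix m m F} (hE : InP E) : InP Eᵀ :=
  ⟨fun i j => hE.1 j i, fun i j k => hE.2.2 j i k, fun i j k => hE.2.1 j i k⟩

theorem InP.submatrix {m' : Type*} {E : Matrix m m F} (hE : InP E) {f : m' → m}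
    (hf : f.Injective) : InP (E.submatrix f f) :=
  ⟨fun i j => hE.1 (f i) (f j), fun i j k hij hik => hf (hE.2.1 (f i) (f j) (f k) hij hik),
    fun i j k hij hkj => hf (hE.2.2 (f i) (f j) (f k) hij hkj)⟩

theorem InD.transpose_eq {I : Matrix m m F} (hI : InD I) : Iᵀ = I :=
  hI.1.isSymm

theorem InD.submatrix {m' : Type*} {I : Matrix m m F} (hI : InD I) {f : m' → m}
    (hf : f.Injective) : InD (I.submatrix f f) :=
  ⟨hI.1.submatrix hf, fun i => hI.2 (f i)⟩

theorem InD.fromBlocks {m' : Type*} {I : Matrix m m F} {I' : Matrix m' m' F} (hI : InD I)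
    (hI' : InD I') :
    InD (fromBlocks I 0 0 I') :=
  ⟨hI.1.fromBlocks hI'.1, Sum.forall.mpr ⟨hI.2, hI'.2⟩⟩

theorem InD.one_sub [DecidableEq m] {I : Matrix m m F} (hI : InD I) : InD (1 - I) :=
  ⟨isDiag_one.sub hI.1, fun i => by rcases hI.2 i with h | h <;> simp [h]⟩

variable [Fintype m]

theorem InP.transpose_mul_apply {E : Matrix m m F} (hE : InP E) {i j : m} (hij : E i j ≠ 0)
    (X : Matrix m m F) (k : m) : (Eᵀ * X) j k = X i k := by
  rw [mul_apply, Finset.sum_eq_single i _ (by simp)]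
  · rw [transpose_apply, (hE.1 i j).resolve_left hij, one_mul]
  · intro l _ hli
    rw [transpose_apply, of_not_not fun hlj => hli (hE.2.2 l j i hlj hij), zero_mul]

theorem InP.mul_apply {E : Matrix m m F} (hE : InP E) {i j : m} (hij : E i j ≠ 0)
    (X : Matrix m m F) (k : m) : (E * X) i k = X j k := by
  simpa using hE.transpose.transpose_mul_apply hij X k

theorem InP.mul_transpose_mul_self {E : Matrix m m F} (hE : InP E) : E * Eᵀ * E = E := by
  ext i k
  by_cases hrow : ∃ j, E i j ≠ 0
  · obtain ⟨j, hij⟩ := hrow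
    rw [mul_assoc, hE.mul_apply hij, hE.transpose_mul_apply hij]
  · push Not at hrow
    simp [Matrix.mul_apply, hrow]

theorem InP.transpose_mul_mul_transpose {E : Matrix m m F} (hE : InP E) : Eᵀ * E * Eᵀ = Eᵀ := by
  simpa using hE.transpose.mul_transpose_mul_self

theorem InP.transpose_mul_self {E : Matrix m m F} (hE : InP E) : InD (Eᵀ * E) := by
  have entry (i j : m) : (Eᵀ * E) i j = 0 ∨ i = j ∧ (Eᵀ * E) i j = 1 := by
    by_cases hcol : ∃ k, E k i ≠ 0
    · obtain ⟨k, hki⟩ := hcol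
      rw [hE.transpose_mul_apply hki, or_iff_not_imp_left]
      exact fun hkj => ⟨hE.2.1 k i j hki hkj, (hE.1 k j).resolve_left hkj⟩
    · push Not at hcol
      simp [Matrix.mul_apply, hcol]
  exact ⟨fun i j hij => (entry i j).resolve_right fun h => hij h.1,
    fun i => (entry i i).imp_right And.right⟩

theorem InP.mul_transpose_self {E : Matrix m m F} (hE : InP E) : InD (E * Eᵀ) := by
  simpa using hE.transpose.transpose_mul_self

theorem InP.eq_zero_of_transpose_mul_eq_zero {E E' : Matrix m m F} (hE : InP E)
    (h : Eᵀ * E' = 0) {i j k : m} (hij : E i j ≠ 0) : E' i k = 0 := by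
  rw [← hE.transpose_mul_apply hij E' k, h, Matrix.zero_apply]

theorem InP.transpose_mul_add {E E' : Matrix m m F} (hE : InP E) (h : Eᵀ * E' = 0) :
    Eᵀ * (E * Eᵀ + E' * E'ᵀ) = Eᵀ := by
  rw [mul_add, ← mul_assoc, ← mul_assoc, hE.transpose_mul_mul_transpose, h, zero_mul, add_zero]

theorem InP.add_mul_transpose {E E' : Matrix m m F} (hE : InP E) (h : E' * Eᵀ = 0) :
    (Eᵀ * E + E'ᵀ * E') * Eᵀ = Eᵀ := by
  rw [add_mul, mul_assoc E'ᵀ, hE.transpose_mul_mul_transpose, h, mul_zero, add_zero]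

theorem fromBlocks_row_unique {A B C D : Matrix m m F}
    (hA : InP A) (hB : InP B) (hC : InP C) (hD : InP D)
    (hAB : Aᵀ * B = 0) (hCD : Cᵀ * D = 0) (i j k : m ⊕ m)
    (hij : fromBlocks A B C D i j ≠ 0) (hik : fromBlocks A B C D i k ≠ 0) : j = k := by
  rcases i with i | i <;> rcases j with j | j <;> rcases k with k | k
  · exact congrArg _ (hA.2.1 i j k hij hik)
  · exact absurd (hA.eq_zero_of_transpose_mul_eq_zero hAB hij) hik
  · exact absurd (hA.eq_zero_of_transpose_mul_eq_zero hAB hik) hij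
  · exact congrArg _ (hB.2.1 i j k hij hik)
  · exact congrArg _ (hC.2.1 i j k hij hik)
  · exact absurd (hC.eq_zero_of_transpose_mul_eq_zero hCD hij) hik
  · exact absurd (hC.eq_zero_of_transpose_mul_eq_zero hCD hik) hij
  · exact congrArg _ (hD.2.1 i j k hij hik)

theorem inP_fromBlocks {A B C D : Matrix m m F}
    (hA : InP A) (hB : InP B) (hC : InP C) (hD : InP D)
    (hAB : Aᵀ * B = 0) (hCD : Cᵀ * D = 0) (hAC : A * Cᵀ = 0) (hBD : B * Dᵀ = 0) :
    InP (fromBlocks A B C D) := by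
  refine ⟨?_, fromBlocks_row_unique hA hB hC hD hAB hCD, fun i j k hij hkj => ?_⟩
  · rintro (i | i) (j | j)
    exacts [hA.1 i j, hB.1 i j, hC.1 i j, hD.1 i j]
  · refine fromBlocks_row_unique hA.transpose hC.transpose hB.transpose hD.transpose
      (by simpa using hAC) (by simpa using hBD) j i k ?_ ?_ <;>
    rwa [← fromBlocks_transpose]

theorem InD.isIdempotentElem {I : Matrix m m F} (hI : InD I) : IsIdempotentElem I := by
  classical
  rw [IsIdempotentElem, ← hI.1.diagonal_diag, diagonal_mul_diagonal]
  congr 1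
  ext i
  rcases hI.2 i with h | h <;> simp [h]

theorem InD.commute {I J : Matrix m m F} (hI : InD I) (hJ : InD J) : Commute I J := by
  classical
  rw [← hI.1.diagonal_diag, ← hJ.1.diagonal_diag]
  exact commute_diagonal _ _

theorem InD.mul {I J : Matrix m m F} (hI : InD I) (hJ : InD J) : InD (I * J) := by
  classical
  rw [← hI.1.diagonal_diag, ← hJ.1.diagonal_diag, diagonal_mul_diagonal]
  refine ⟨isDiag_diagonal _, fun i => ?_⟩
  rcases hI.2 i with h | h <;> rcases hJ.2 i with h' | h' <;> simp [h, h']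

end ZeroOneMatrices

section Blk

variable {F : Type*} [Field F] {n : ℕ} {A B C D A' B' C' D' : Matrix (Fin n) (Fin n) F}

theorem blk_finSumFinEquiv (x y : Fin n ⊕ Fin n) :
    blk A B C D (finSumFinEquiv x) (finSumFinEquiv y) = fromBlocks A B C D x y := by
  simp only [blk, submatrix_apply, Equiv.symm_apply_apply]

theorem blk_mul_blk : blk A B C D * blk A' B' C' D' =
    blk (A * A' + B * C') (A * B' + B * D') (C * A' + D * C') (C * B' + D * D') := by
  simp only [blk, submatrix_mul_equiv, fromBlocks_multiply]

theorem transpose_blk : (blk A B C D)ᵀ = blk Aᵀ Cᵀ Bᵀ Dᵀ := by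
  simp only [blk, transpose_submatrix, fromBlocks_transpose]

theorem blk_one : blk (1 : Matrix (Fin n) (Fin n) F) 0 0 1 = 1 := by
  simp only [blk, fromBlocks_one, submatrix_one_equiv]

theorem blk_sub_blk :
    blk A B C D - blk A' B' C' D' = blk (A - A') (B - B') (C - C') (D - D') := by
  ext i j
  obtain ⟨i | i, rfl⟩ := finSumFinEquiv.surjective i <;>
    obtain ⟨j | j, rfl⟩ := finSumFinEquiv.surjective j <;>
    simp only [Matrix.sub_apply, blk_finSumFinEquiv, fromBlocks_apply₁₁, fromBlocks_apply₁₂,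
      fromBlocks_apply₂₁, fromBlocks_apply₂₂]

theorem blk_inj : blk A B C D = blk A' B' C' D' ↔ A = A' ∧ B = B' ∧ C = C' ∧ D = D' := by
  rw [← fromBlocks_inj]
  exact (reindex finSumFinEquiv finSumFinEquiv).apply_eq_iff_eq

theorem blk_diag_mul_blk_eq_self_iff {p p' : Matrix (Fin n) (Fin n) F} :
    blk p 0 0 p' * blk A B C D = blk A B C D ↔
      p * A = A ∧ p * B = B ∧ p' * C = C ∧ p' * D = D := by
  simp only [blk_mul_blk, blk_inj, zero_mul, add_zero, zero_add]

theorem blk_mul_blk_diag_eq_self_iff {q q' : Matrix (Fin n) (Fin n) F} :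
    blk A B C D * blk q 0 0 q' = blk A B C D ↔
      A * q = A ∧ B * q' = B ∧ C * q = C ∧ D * q' = D := by
  simp only [blk_mul_blk, blk_inj, mul_zero, add_zero, zero_add]

theorem isUnit_blk_zero₁₂ : IsUnit (blk A 0 C D) ↔ IsUnit A ∧ IsUnit D := by
  rw [blk, isUnit_submatrix_equiv, isUnit_fromBlocks_zero₁₂]

theorem inD_blk (hA : InD A) (hD : InD D) : InD (blk A 0 0 D) :=
  (hA.fromBlocks hD).submatrix finSumFinEquiv.symm.injective

theorem inP_blk (hA : InP A) (hB : InP B) (hC : InP C) (hD : InP D)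
    (hAB : Aᵀ * B = 0) (hCD : Cᵀ * D = 0) (hAC : A * Cᵀ = 0) (hBD : B * Dᵀ = 0) :
    InP (blk A B C D) :=
  (inP_fromBlocks hA hB hC hD hAB hCD hAC hBD).submatrix finSumFinEquiv.symm.injective

theorem isUpperTriangular_blk_zero₂₁ (hA : A.IsUpperTriangular) (hD : D.IsUpperTriangular) :
    (blk A B 0 D).IsUpperTriangular := by
  intro i j hji
  obtain ⟨i | i, rfl⟩ := finSumFinEquiv.surjective i <;>
    obtain ⟨j | j, rfl⟩ := finSumFinEquiv.surjective j <;>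
    rw [blk_finSumFinEquiv]
  · exact hA hji
  · exact absurd hji (Fin.lt_def.mpr (Nat.lt_add_right j i.isLt)).not_gt
  · rfl
  · exact hD (by simpa using hji)

theorem isLowerTriangular_blk_zero₁₂ (hA : A.IsLowerTriangular) (hD : D.IsLowerTriangular) :
    (blk A 0 C D).IsLowerTriangular := by
  have h : (blk A 0 C D)ᵀ.IsUpperTriangular := by
    rw [transpose_blk, transpose_zero]
    exact isUpperTriangular_blk_zero₂₁ hA.transpose hD.transpose
  exact h.transpose

theorem blk_apply_self_eq_one (hA : ∀ i, A i i = 1) (hD : ∀ i, D i i = 1) (i : Fin (n + n)) :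
    blk A B C D i i = 1 := by
  obtain ⟨i | i, rfl⟩ := finSumFinEquiv.surjective i <;> rw [blk_finSumFinEquiv]
  exacts [hA i, hD i]

theorem blk_mem_oneAddCorner_iff {p p' q q' : Matrix (Fin n) (Fin n) F} :
    blk A B C D ∈ oneAddCorner (blk p 0 0 p') (blk q 0 0 q') ↔
      A ∈ oneAddCorner p q ∧ D ∈ oneAddCorner p' q' ∧
        (p * B = B ∧ B * q' = B) ∧ (p' * C = C ∧ C * q = C) := by
  simp only [mem_oneAddCorner_iff, ← blk_one, blk_sub_blk, blk_mul_blk, blk_inj, zero_mul, mul_zero,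
    add_zero, zero_add, sub_zero]
  tauto

theorem blk_diag_mem_oneAddCorner {p p' q q' : Matrix (Fin n) (Fin n) F}
    (hA : A ∈ oneAddCorner p q) (hD : D ∈ oneAddCorner p' q') :
    blk A 0 0 D ∈ oneAddCorner (blk p 0 0 p') (blk q 0 0 q') := by
  simp [blk_mem_oneAddCorner_iff, hA, hD]

theorem blk_lower_mem_oneAddCorner {p p' q q' : Matrix (Fin n) (Fin n) F}
    (hpC : p' * C = C) (hCq : C * q = C) :
    blk 1 0 (-C) 1 ∈ oneAddCorner (blk p 0 0 p') (blk q 0 0 q') := by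
  simp [blk_mem_oneAddCorner_iff, hpC, hCq, one_mem]

theorem blk_upper_mem_oneAddCorner {p p' q q' : Matrix (Fin n) (Fin n) F}
    (hpB : p * B = B) (hBq : B * q' = B) :
    blk 1 (-B) 0 1 ∈ oneAddCorner (blk p 0 0 p') (blk q 0 0 q') := by
  simp [blk_mem_oneAddCorner_iff, hpB, hBq, one_mem]

theorem blk_diag_mul_blk_mul_blk_diag {P S P' S' : Matrix (Fin n) (Fin n) F} :
    blk P 0 0 S * blk A B C D * blk P' 0 0 S' =
      blk (P * A * P') (P * B * S') (S * C * P') (S * D * S') := by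
  simp only [blk_mul_blk, zero_mul, mul_zero, add_zero, zero_add]

theorem blk_mul_transpose_self (hAC : A * Cᵀ = 0) (hBD : B * Dᵀ = 0) :
    blk A B C D * (blk A B C D)ᵀ = blk (A * Aᵀ + B * Bᵀ) 0 0 (C * Cᵀ + D * Dᵀ) := by
  have hCA : C * Aᵀ = 0 := by simpa using congrArg transpose hAC
  have hDB : D * Bᵀ = 0 := by simpa using congrArg transpose hBD
  rw [transpose_blk, blk_mul_blk, hAC, hBD, hCA, hDB, add_zero]

theorem transpose_blk_mul_self (hAB : Aᵀ * B = 0) (hCD : Cᵀ * D = 0) :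
    (blk A B C D)ᵀ * blk A B C D = blk (Aᵀ * A + Cᵀ * C) 0 0 (Bᵀ * B + Dᵀ * D) := by
  simpa [transpose_blk] using
    blk_mul_transpose_self (A := Aᵀ) (B := Cᵀ) (C := Bᵀ) (D := Dᵀ) (by simpa) (by simpa)

theorem blk_eliminate_pivot {E Q B D T : Matrix (Fin n) (Fin n) F} (hT : T * E * T = T) :
    blk 1 0 (-(B * T)) 1 * blk E Q B D * blk 1 (-(T * Q)) 0 1 =
      blk E ((1 - E * T) * Q) (B * (1 - T * E)) (D - B * T * Q) := by
  simp only [blk_mul_blk, blk_inj]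
  refine ⟨by noncomm_ring, by noncomm_ring, by noncomm_ring, ?_⟩
  linear_combination (norm := noncomm_ring) B * hT * Q

theorem blk_eliminate_corner {E X Y G S T : Matrix (Fin n) (Fin n) F}
    (hS : S * E = 0) (hT : E * T = 0) :
    blk 1 0 (-(G * S)) 1 * blk E X Y G * blk 1 (-(T * G * (1 - S * X))) 0 1 =
      blk E X Y ((1 - Y * T) * G * (1 - S * X)) := by
  simp only [blk_mul_blk, blk_inj]
  refine ⟨by noncomm_ring, ?_, ?_, ?_⟩
  · linear_combination (norm := noncomm_ring) -hT * (G * (1 - S * X))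
  · linear_combination (norm := noncomm_ring) -G * hS
  · linear_combination (norm := noncomm_ring) G * hS * (T * G * (1 - S * X))

end Blk

section CornerLEU

variable {F : Type*} [Field F] {n : ℕ} {I J A L E U I' J' A' L' E' U' : Matrix (Fin n) (Fin n) F}

/-- An LEU-decomposition of `A ∈ F_{I,J}` with `I, J ∈ D_n`, in normal form: the conditions
`L - (𝟙 - I_E) ∈ F_{I, I_E}` and `U - (𝟙 - J_E) ∈ F_{J_E, J}` are replaced by `L - 𝟙 ∈ F_{I, I_E}`
and `U - 𝟙 ∈ F_{J_E, J}`, which makes the left and right factors run through monoids. -/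
structure IsCornerLEU (I J A L E U : Matrix (Fin n) (Fin n) F) : Prop where
  inD_left : InD I
  inD_right : InD J
  left_mul : I * A = A
  mul_right : A * J = A
  mul_mul_eq : L * A * U = E
  inP : InP E
  isUnit_lower : IsUnit L
  isLowerTriangular : L.IsLowerTriangular
  isUpperTriangular : U.IsUpperTriangular
  diag_eq_one : ∀ i, U i i = 1
  lower_mem : L ∈ oneAddCorner I (E * Eᵀ)
  upper_mem : U ∈ oneAddCorner (Eᵀ * E) J

theorem IsLEU.isCornerLEU (h : IsLEU I J A L E U) (hI : InD I) (hJ : InD J)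
    (hIA : I * A = A) (hAJ : A * J = A) : IsCornerLEU I J A L E U := by
  obtain ⟨hA, hE, hL, hLower, hUpper, hDiag, hLcorner, hUcorner⟩ := h
  have hU := isUnit_of_isUpperTriangular_of_apply_self_eq_one (fun i j => hUpper i j) hDiag
  have hLAU : L * A * U = E := (eq_inv_mul_mul_inv_iff hL hU).mp hA
  have hIE : I * E = E := by
    rw [← hLAU, ← mul_assoc, left_mul_mul_eq_of_mul_sub_mul_eq hI.isIdempotentElem
      (hI.commute hE.mul_transpose_self) hLcorner hIA]
  have hEJ : E * J = E := by
    rw [← hLAU, mul_assoc L A U, mul_assoc, mul_mul_right_eq_of_mul_sub_mul_eq hJ.isIdempotentElem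
      (hE.transpose_mul_self.commute hJ) hUcorner hAJ]
  refine ⟨hI, hJ, hIA, hAJ, hLAU, hE, hL, fun i j => hLower i j, fun i j => hUpper i j, hDiag,
    ?_, ?_⟩
  · refine (mem_oneAddCorner_iff_mul_sub_mul_eq hI.isIdempotentElem
      hE.mul_transpose_self.isIdempotentElem ?_ hE.mul_transpose_self.isIdempotentElem).mpr hLcorner
    rw [← mul_assoc, hIE]
  · refine (mem_oneAddCorner_iff_mul_sub_mul_eq hE.transpose_mul_self.isIdempotentElem
      hJ.isIdempotentElem hE.transpose_mul_self.isIdempotentElem ?_).mpr hUcorner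
    rw [mul_assoc, hEJ]

namespace IsCornerLEU

theorem left_mul_pivot (h : IsCornerLEU I J A L E U) : I * E = E := by
  rw [← h.mul_mul_eq, ← mul_assoc, left_mul_mul_eq_of_mem_oneAddCorner h.lower_mem h.left_mul]

theorem pivot_mul_right (h : IsCornerLEU I J A L E U) : E * J = E := by
  rw [← h.mul_mul_eq, mul_assoc L A U, mul_assoc,
    mul_mul_right_eq_of_mem_oneAddCorner h.upper_mem h.mul_right]

theorem pivot_transpose_mul_left (h : IsCornerLEU I J A L E U) : Eᵀ * I = Eᵀ := by
  simpa [h.inD_left.transpose_eq] using congrArg Matrix.transpose h.left_mul_pivot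

theorem right_mul_pivot_transpose (h : IsCornerLEU I J A L E U) : J * Eᵀ = Eᵀ := by
  simpa [h.inD_right.transpose_eq] using congrArg Matrix.transpose h.pivot_mul_right

theorem isLEU (h : IsCornerLEU I J A L E U) : IsLEU I J A L E U := by
  have hU := isUnit_of_isUpperTriangular_of_apply_self_eq_one h.isUpperTriangular h.diag_eq_one
  have hP := h.inP.mul_transpose_self.isIdempotentElem
  have hQ := h.inP.transpose_mul_self.isIdempotentElem
  refine ⟨(eq_inv_mul_mul_inv_iff h.isUnit_lower hU).mpr h.mul_mul_eq, h.inP, h.isUnit_lower,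
    fun i j hij => h.isLowerTriangular hij, fun i j hij => h.isUpperTriangular hij,
    h.diag_eq_one, ?_, ?_⟩
  · refine (mem_oneAddCorner_iff_mul_sub_mul_eq h.inD_left.isIdempotentElem hP ?_ hP).mp h.lower_mem
    rw [← mul_assoc, h.left_mul_pivot]
  · refine (mem_oneAddCorner_iff_mul_sub_mul_eq hQ h.inD_right.isIdempotentElem hQ ?_).mp
      h.upper_mem
    rw [mul_assoc, h.pivot_mul_right]

theorem upper_mul_upper_apply_self (h : IsCornerLEU I J A L E U)
    (h' : IsCornerLEU I' J' A' L' E' U') (i : Fin n) : (U * U') i i = 1 := by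
  rw [mul_apply_self_of_isUpperTriangular h.isUpperTriangular h'.isUpperTriangular,
    h.diag_eq_one, h'.diag_eq_one, one_mul]

theorem left_compl_mul_compl_mul (h : IsCornerLEU I J A L E U) {X : Matrix (Fin n) (Fin n) F}
    (hX : I * X = X) : I * (1 - E * Eᵀ) * ((1 - E * Eᵀ) * X) = (1 - E * Eᵀ) * X := by
  have hP := h.inP.mul_transpose_self.one_sub
  rw [mul_assoc, ← mul_assoc (1 - E * Eᵀ), hP.isIdempotentElem.eq, ← mul_assoc,
    (h.inD_left.commute hP).eq, mul_assoc, hX]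

theorem mul_compl_mul_right_compl (h : IsCornerLEU I J A L E U) {X : Matrix (Fin n) (Fin n) F}
    (hX : X * J = X) : X * (1 - Eᵀ * E) * (J * (1 - Eᵀ * E)) = X * (1 - Eᵀ * E) := by
  have hP := h.inP.transpose_mul_self.one_sub
  rw [(h.inD_right.commute hP).eq, mul_assoc, ← mul_assoc (1 - Eᵀ * E), hP.isIdempotentElem.eq,
    ← (h.inD_right.commute hP).eq, ← mul_assoc, hX]

theorem pivot_transpose_mul_compl_pivot (h : IsCornerLEU I J A L E U)
    (h' : IsCornerLEU (I * (1 - E * Eᵀ)) J' A' L' E' U') : Eᵀ * E' = 0 := by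
  rw [← h'.left_mul_pivot, mul_assoc, ← mul_assoc, h.pivot_transpose_mul_left, ← mul_assoc,
    mul_sub, mul_one, ← mul_assoc, h.inP.transpose_mul_mul_transpose, sub_self, zero_mul]

theorem pivot_mul_compl_pivot_transpose (h : IsCornerLEU I J A L E U)
    (h' : IsCornerLEU I' (J * (1 - Eᵀ * E)) A' L' E' U') : E * E'ᵀ = 0 := by
  rw [← h'.right_mul_pivot_transpose, ← mul_assoc, ← mul_assoc, h.pivot_mul_right, mul_sub,
    mul_one, ← mul_assoc, h.inP.mul_transpose_mul_self, sub_self, zero_mul]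

theorem compl_pivot_transpose_mul_pivot (h : IsCornerLEU I J A L E U)
    (h' : IsCornerLEU (I * (1 - E * Eᵀ)) J' A' L' E' U') : E'ᵀ * E = 0 := by
  simpa using congrArg transpose (h.pivot_transpose_mul_compl_pivot h')

theorem compl_pivot_mul_pivot_transpose (h : IsCornerLEU I J A L E U)
    (h' : IsCornerLEU I' (J * (1 - Eᵀ * E)) A' L' E' U') : E' * Eᵀ = 0 := by
  simpa using congrArg transpose (h.pivot_mul_compl_pivot_transpose h')

theorem compl_lower_mul_pivot (h : IsCornerLEU I J A L E U)
    (h' : IsCornerLEU (I * (1 - E * Eᵀ)) J' A' L' E' U') : L' * E = E :=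
  oneAddCorner_mul_eq_self h'.lower_mem
    (by rw [mul_assoc, h.compl_pivot_transpose_mul_pivot h', mul_zero])

theorem pivot_mul_compl_upper (h : IsCornerLEU I J A L E U)
    (h' : IsCornerLEU I' (J * (1 - Eᵀ * E)) A' L' E' U') : E * U' = E :=
  mul_oneAddCorner_eq_self h'.upper_mem
    (by rw [← mul_assoc, h.pivot_mul_compl_pivot_transpose h', zero_mul])

theorem lower_mem_add (h : IsCornerLEU I J A L E U)
    (h' : IsCornerLEU (I * (1 - E * Eᵀ)) J' A' L' E' U') :
    L ∈ oneAddCorner I (E * Eᵀ + E' * E'ᵀ) := by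
  refine oneAddCorner_mono h.inD_left.isIdempotentElem ?_ h.lower_mem
  rw [mul_assoc, h.inP.transpose_mul_add (h.pivot_transpose_mul_compl_pivot h')]

theorem compl_lower_mem_add (h : IsCornerLEU I J A L E U)
    (h' : IsCornerLEU (I * (1 - E * Eᵀ)) J' A' L' E' U') :
    L' ∈ oneAddCorner I (E * Eᵀ + E' * E'ᵀ) := by
  refine oneAddCorner_mono ?_ ?_ h'.lower_mem
  · rw [← mul_assoc, h.inD_left.isIdempotentElem.eq]
  · rw [add_comm, mul_assoc, h'.inP.transpose_mul_add (h.compl_pivot_transpose_mul_pivot h')]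

theorem upper_mem_add (h : IsCornerLEU I J A L E U)
    (h' : IsCornerLEU I' (J * (1 - Eᵀ * E)) A' L' E' U') :
    U ∈ oneAddCorner (Eᵀ * E + E'ᵀ * E') J := by
  refine oneAddCorner_mono ?_ h.inD_right.isIdempotentElem h.upper_mem
  rw [← mul_assoc, h.inP.add_mul_transpose (h.compl_pivot_mul_pivot_transpose h')]

theorem compl_upper_mem_add (h : IsCornerLEU I J A L E U)
    (h' : IsCornerLEU I' (J * (1 - Eᵀ * E)) A' L' E' U') :
    U' ∈ oneAddCorner (Eᵀ * E + E'ᵀ * E') J := by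
  have hJ := h.inD_right
  refine oneAddCorner_mono ?_ ?_ h'.upper_mem
  · rw [add_comm, ← mul_assoc, h'.inP.add_mul_transpose (h.pivot_mul_compl_pivot_transpose h')]
  · rw [(hJ.commute h.inP.transpose_mul_self.one_sub).eq, mul_assoc, hJ.isIdempotentElem.eq]

end IsCornerLEU

end CornerLEU

section RecursiveStep

variable {F : Type*} [Field F] {n : ℕ}
  {I₁ I₂ J₁ J₂ I₁' I₂' J₁' J₂' A₁₁ A₁₂ A₂₁ A₂₂ A'₁₂ A'₂₁ A''₂₂ Q B G L₁₁ L₁₂ L₂₁ L₂₂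
    E₁₁ E₁₂ E₂₁ E₂₂ U₁₁ U₁₂ U₂₁ U₂₂ S T X : Matrix (Fin n) (Fin n) F}

theorem blk_lower_eq_mul :
    blk (L₁₂ * L₁₁) 0 (-(L₂₂ * (G * S * L₁₂ + L₂₁ * B * T) * L₁₁)) (L₂₂ * L₂₁) =
      blk 1 0 0 L₂₂ * blk 1 0 (-(G * S)) 1 * blk L₁₂ 0 0 L₂₁ * blk 1 0 (-(B * T)) 1 *
        blk L₁₁ 0 0 1 := by
  simp only [blk_mul_blk, blk_inj]
  refine ⟨?_, ?_, ?_, ?_⟩ <;> noncomm_ring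

theorem blk_upper_eq_mul :
    blk (U₁₁ * U₂₁) (-(U₁₁ * (U₂₁ * S * G * X + T * Q * U₁₂) * U₂₂)) 0 (U₁₂ * U₂₂) =
      blk U₁₁ 0 0 1 * blk 1 (-(T * Q)) 0 1 * blk U₂₁ 0 0 U₁₂ * blk 1 (-(S * G * X)) 0 1 *
        blk 1 0 0 U₂₂ := by
  simp only [blk_mul_blk, blk_inj]
  refine ⟨?_, ?_, ?_, ?_⟩ <;> noncomm_ring

namespace IsCornerLEU

theorem left_mul_schur (h₂₁ : IsCornerLEU I₂ J₁' A'₂₁ L₂₁ E₂₁ U₂₁) (hB : I₂ * B = B)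
    (hA : I₂ * A₂₂ = A₂₂) :
    I₂ * (L₂₁ * (A₂₂ - B * T * Q) * U₁₂) = L₂₁ * (A₂₂ - B * T * Q) * U₁₂ := by
  have hX : I₂ * (A₂₂ - B * T * Q) = A₂₂ - B * T * Q := by
    rw [mul_sub, ← mul_assoc, ← mul_assoc, hA, hB]
  rw [← mul_assoc, left_mul_mul_eq_of_mem_oneAddCorner h₂₁.lower_mem hX]

theorem schur_mul_right (h₁₂ : IsCornerLEU I₁' J₂ A'₁₂ L₁₂ E₁₂ U₁₂) (hQ : Q * J₂ = Q)
    (hA : A₂₂ * J₂ = A₂₂) :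
    L₂₁ * (A₂₂ - B * T * Q) * U₁₂ * J₂ = L₂₁ * (A₂₂ - B * T * Q) * U₁₂ := by
  have hX : (A₂₂ - B * T * Q) * J₂ = A₂₂ - B * T * Q := by
    rw [sub_mul, mul_assoc, hA, hQ]
  rw [mul_assoc L₂₁, mul_assoc L₂₁, mul_mul_right_eq_of_mem_oneAddCorner h₁₂.upper_mem hX]

theorem blk_lower_mem (h₁₁ : IsCornerLEU I₁ J₁ A₁₁ L₁₁ E₁₁ U₁₁)
    (h₁₂ : IsCornerLEU (I₁ * (1 - E₁₁ * E₁₁ᵀ)) J₂ A'₁₂ L₁₂ E₁₂ U₁₂)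
    (h₂₁ : IsCornerLEU I₂ J₁' A'₂₁ L₂₁ E₂₁ U₂₁)
    (h₂₂ : IsCornerLEU (I₂ * (1 - E₂₁ * E₂₁ᵀ)) J₂' A''₂₂ L₂₂ E₂₂ U₂₂)
    (hB : I₂ * B = B) (hG : I₂ * G = G) :
    blk (L₁₂ * L₁₁) 0 (-(L₂₂ * (G * E₁₂ᵀ * L₁₂ + L₂₁ * B * E₁₁ᵀ) * L₁₁)) (L₂₂ * L₂₁) ∈
      oneAddCorner (blk I₁ 0 0 I₂)
        (blk (E₁₁ * E₁₁ᵀ + E₁₂ * E₁₂ᵀ) 0 0 (E₂₁ * E₂₁ᵀ + E₂₂ * E₂₂ᵀ)) := by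
  have hT : E₁₁ᵀ * (E₁₁ * E₁₁ᵀ + E₁₂ * E₁₂ᵀ) = E₁₁ᵀ :=
    h₁₁.inP.transpose_mul_add (h₁₁.pivot_transpose_mul_compl_pivot h₁₂)
  have hS : E₁₂ᵀ * (E₁₁ * E₁₁ᵀ + E₁₂ * E₁₂ᵀ) = E₁₂ᵀ := by
    rw [add_comm, h₁₂.inP.transpose_mul_add (h₁₁.compl_pivot_transpose_mul_pivot h₁₂)]
  rw [blk_lower_eq_mul]
  refine mul_mem (mul_mem (mul_mem (mul_mem ?_ ?_) ?_) ?_) ?_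
  · exact blk_diag_mem_oneAddCorner (one_mem _) (h₂₁.compl_lower_mem_add h₂₂)
  · exact blk_lower_mem_oneAddCorner (by rw [← mul_assoc, hG]) (by rw [mul_assoc, hS])
  · exact blk_diag_mem_oneAddCorner (h₁₁.compl_lower_mem_add h₁₂) (h₂₁.lower_mem_add h₂₂)
  · exact blk_lower_mem_oneAddCorner (by rw [← mul_assoc, hB]) (by rw [mul_assoc, hT])
  · exact blk_diag_mem_oneAddCorner (h₁₁.lower_mem_add h₁₂) (one_mem _)

theorem blk_upper_mem (h₁₁ : IsCornerLEU I₁ J₁ A₁₁ L₁₁ E₁₁ U₁₁)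
    (h₁₂ : IsCornerLEU I₁' J₂ A'₁₂ L₁₂ E₁₂ U₁₂)
    (h₂₁ : IsCornerLEU I₂ (J₁ * (1 - E₁₁ᵀ * E₁₁)) A'₂₁ L₂₁ E₂₁ U₂₁)
    (h₂₂ : IsCornerLEU I₂' (J₂ * (1 - E₁₂ᵀ * E₁₂)) A''₂₂ L₂₂ E₂₂ U₂₂)
    (hQ : Q * J₂ = Q) (hG : G * J₂ = G) :
    blk (U₁₁ * U₂₁) (-(U₁₁ * (U₂₁ * E₂₁ᵀ * G * (1 - E₁₂ᵀ * E₁₂) + E₁₁ᵀ * Q * U₁₂) * U₂₂)) 0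
        (U₁₂ * U₂₂) ∈
      oneAddCorner (blk (E₁₁ᵀ * E₁₁ + E₂₁ᵀ * E₂₁) 0 0 (E₁₂ᵀ * E₁₂ + E₂₂ᵀ * E₂₂))
        (blk J₁ 0 0 J₂) := by
  have hT : (E₁₁ᵀ * E₁₁ + E₂₁ᵀ * E₂₁) * E₁₁ᵀ = E₁₁ᵀ :=
    h₁₁.inP.add_mul_transpose (h₁₁.compl_pivot_mul_pivot_transpose h₂₁)
  have hS : (E₁₁ᵀ * E₁₁ + E₂₁ᵀ * E₂₁) * E₂₁ᵀ = E₂₁ᵀ := by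
    rw [add_comm, h₂₁.inP.add_mul_transpose (h₁₁.pivot_mul_compl_pivot_transpose h₂₁)]
  have hJ : (1 - E₁₂ᵀ * E₁₂) * J₂ = J₂ * (1 - E₁₂ᵀ * E₁₂) :=
    (h₁₂.inP.transpose_mul_self.one_sub.commute h₁₂.inD_right).eq
  rw [blk_upper_eq_mul]
  refine mul_mem (mul_mem (mul_mem (mul_mem ?_ ?_) ?_) ?_) ?_
  · exact blk_diag_mem_oneAddCorner (h₁₁.upper_mem_add h₂₁) (one_mem _)
  · exact blk_upper_mem_oneAddCorner (by rw [← mul_assoc, hT]) (by rw [mul_assoc, hQ])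
  · exact blk_diag_mem_oneAddCorner (h₁₁.compl_upper_mem_add h₂₁) (h₁₂.upper_mem_add h₂₂)
  · exact blk_upper_mem_oneAddCorner (by rw [← mul_assoc, ← mul_assoc, hS])
      (by rw [mul_assoc, hJ, ← mul_assoc, mul_assoc _ G, hG])
  · exact blk_diag_mem_oneAddCorner (one_mem _) (h₁₂.compl_upper_mem_add h₂₂)

theorem blk_mul_mul_eq (h₁₁ : IsCornerLEU I₁ J₁ A₁₁ L₁₁ E₁₁ U₁₁)
    (h₁₂ : IsCornerLEU (I₁ * (1 - E₁₁ * E₁₁ᵀ)) J₂ ((1 - E₁₁ * E₁₁ᵀ) * Q) L₁₂ E₁₂ U₁₂)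
    (h₂₁ : IsCornerLEU I₂ (J₁ * (1 - E₁₁ᵀ * E₁₁)) (B * (1 - E₁₁ᵀ * E₁₁)) L₂₁ E₂₁ U₂₁)
    (h₂₂ : IsCornerLEU (I₂ * (1 - E₂₁ * E₂₁ᵀ)) (J₂ * (1 - E₁₂ᵀ * E₁₂))
      ((1 - E₂₁ * E₂₁ᵀ) * G * (1 - E₁₂ᵀ * E₁₂)) L₂₂ E₂₂ U₂₂)
    (hQ : Q = L₁₁ * A₁₂) (hB : B = A₂₁ * U₁₁) (hG : G = L₂₁ * (A₂₂ - B * E₁₁ᵀ * Q) * U₁₂) :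
    blk (L₁₂ * L₁₁) 0 (-(L₂₂ * (G * E₁₂ᵀ * L₁₂ + L₂₁ * B * E₁₁ᵀ) * L₁₁)) (L₂₂ * L₂₁) *
        blk A₁₁ A₁₂ A₂₁ A₂₂ *
        blk (U₁₁ * U₂₁) (-(U₁₁ * (U₂₁ * E₂₁ᵀ * G * (1 - E₁₂ᵀ * E₁₂) + E₁₁ᵀ * Q * U₁₂) * U₂₂)) 0
          (U₁₂ * U₂₂) =
      blk E₁₁ E₁₂ E₂₁ E₂₂ := by
  have reduce₁₁ : blk L₁₁ 0 0 1 * blk A₁₁ A₁₂ A₂₁ A₂₂ * blk U₁₁ 0 0 1 = blk E₁₁ Q B A₂₂ := by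
    rw [blk_diag_mul_blk_mul_blk_diag, h₁₁.mul_mul_eq, mul_one, one_mul, mul_one, one_mul, hQ, hB]
  have clear₁₁ := blk_eliminate_pivot (Q := Q) (B := B) (D := A₂₂)
    h₁₁.inP.transpose_mul_mul_transpose
  have reduce₁₂₂₁ : blk L₁₂ 0 0 L₂₁ * blk E₁₁ ((1 - E₁₁ * E₁₁ᵀ) * Q) (B * (1 - E₁₁ᵀ * E₁₁))
      (A₂₂ - B * E₁₁ᵀ * Q) * blk U₂₁ 0 0 U₁₂ = blk E₁₁ E₁₂ E₂₁ G := by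
    rw [blk_diag_mul_blk_mul_blk_diag, h₁₁.compl_lower_mul_pivot h₁₂,
      h₁₁.pivot_mul_compl_upper h₂₁, h₁₂.mul_mul_eq, h₂₁.mul_mul_eq, hG]
  have clear₁₂₂₁ := blk_eliminate_corner (X := E₁₂) (Y := E₂₁) (G := G)
    (h₁₁.compl_pivot_transpose_mul_pivot h₁₂) (h₁₁.pivot_mul_compl_pivot_transpose h₂₁)
  have reduce₂₂ : blk 1 0 0 L₂₂ * blk E₁₁ E₁₂ E₂₁ ((1 - E₂₁ * E₂₁ᵀ) * G * (1 - E₁₂ᵀ * E₁₂)) *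
      blk 1 0 0 U₂₂ = blk E₁₁ E₁₂ E₂₁ E₂₂ := by
    rw [blk_diag_mul_blk_mul_blk_diag, h₂₂.mul_mul_eq, one_mul, mul_one, one_mul, mul_one,
      h₁₂.pivot_mul_compl_upper h₂₂, h₂₁.compl_lower_mul_pivot h₂₂]
  rw [← reduce₂₂, ← clear₁₂₂₁, ← reduce₁₂₂₁, ← clear₁₁, ← reduce₁₁, blk_lower_eq_mul,
    blk_upper_eq_mul]
  simp only [mul_assoc]

end IsCornerLEU

theorem isCornerLEU_blk (h₁₁ : IsCornerLEU I₁ J₁ A₁₁ L₁₁ E₁₁ U₁₁)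
    (h₁₂ : IsCornerLEU (I₁ * (1 - E₁₁ * E₁₁ᵀ)) J₂ ((1 - E₁₁ * E₁₁ᵀ) * Q) L₁₂ E₁₂ U₁₂)
    (h₂₁ : IsCornerLEU I₂ (J₁ * (1 - E₁₁ᵀ * E₁₁)) (B * (1 - E₁₁ᵀ * E₁₁)) L₂₁ E₂₁ U₂₁)
    (h₂₂ : IsCornerLEU (I₂ * (1 - E₂₁ * E₂₁ᵀ)) (J₂ * (1 - E₁₂ᵀ * E₁₂))
      ((1 - E₂₁ * E₂₁ᵀ) * G * (1 - E₁₂ᵀ * E₁₂)) L₂₂ E₂₂ U₂₂)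
    (hQ : Q = L₁₁ * A₁₂) (hB : B = A₂₁ * U₁₁) (hG : G = L₂₁ * (A₂₂ - B * E₁₁ᵀ * Q) * U₁₂)
    (hIA : blk I₁ 0 0 I₂ * blk A₁₁ A₁₂ A₂₁ A₂₂ = blk A₁₁ A₁₂ A₂₁ A₂₂)
    (hAJ : blk A₁₁ A₁₂ A₂₁ A₂₂ * blk J₁ 0 0 J₂ = blk A₁₁ A₁₂ A₂₁ A₂₂) :
    IsCornerLEU (blk I₁ 0 0 I₂) (blk J₁ 0 0 J₂) (blk A₁₁ A₁₂ A₂₁ A₂₂)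
      (blk (L₁₂ * L₁₁) 0 (-(L₂₂ * (G * E₁₂ᵀ * L₁₂ + L₂₁ * B * E₁₁ᵀ) * L₁₁)) (L₂₂ * L₂₁))
      (blk E₁₁ E₁₂ E₂₁ E₂₂)
      (blk (U₁₁ * U₂₁) (-(U₁₁ * (U₂₁ * E₂₁ᵀ * G * (1 - E₁₂ᵀ * E₁₂) + E₁₁ᵀ * Q * U₁₂) * U₂₂)) 0
        (U₁₂ * U₂₂)) := by
  obtain ⟨-, -, hIA₂₁, hIA₂₂⟩ := blk_diag_mul_blk_eq_self_iff.mp hIA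
  obtain ⟨-, hAJ₁₂, -, hAJ₂₂⟩ := blk_mul_blk_diag_eq_self_iff.mp hAJ
  have hIB : I₂ * B = B := by rw [hB, ← mul_assoc, hIA₂₁]
  have hQJ : Q * J₂ = Q := by rw [hQ, mul_assoc, hAJ₁₂]
  have hIG : I₂ * G = G := hG ▸ h₂₁.left_mul_schur hIB hIA₂₂
  have hGJ : G * J₂ = G := hG ▸ h₁₂.schur_mul_right hQJ hAJ₂₂
  have row₁ := h₁₁.pivot_transpose_mul_compl_pivot h₁₂
  have row₂ := h₂₁.pivot_transpose_mul_compl_pivot h₂₂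
  have column₁ := h₁₁.pivot_mul_compl_pivot_transpose h₂₁
  have column₂ := h₁₂.pivot_mul_compl_pivot_transpose h₂₂
  exact {
    inD_left := inD_blk h₁₁.inD_left h₂₁.inD_left
    inD_right := inD_blk h₁₁.inD_right h₁₂.inD_right
    left_mul := hIA
    mul_right := hAJ
    mul_mul_eq := h₁₁.blk_mul_mul_eq h₁₂ h₂₁ h₂₂ hQ hB hG
    inP := inP_blk h₁₁.inP h₁₂.inP h₂₁.inP h₂₂.inP row₁ row₂ column₁ column₂
    isUnit_lower := isUnit_blk_zero₁₂.mpr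
      ⟨h₁₂.isUnit_lower.mul h₁₁.isUnit_lower, h₂₂.isUnit_lower.mul h₂₁.isUnit_lower⟩
    isLowerTriangular := isLowerTriangular_blk_zero₁₂
      (h₁₂.isLowerTriangular.mul h₁₁.isLowerTriangular)
      (h₂₂.isLowerTriangular.mul h₂₁.isLowerTriangular)
    isUpperTriangular := isUpperTriangular_blk_zero₂₁
      (h₁₁.isUpperTriangular.mul h₂₁.isUpperTriangular)
      (h₁₂.isUpperTriangular.mul h₂₂.isUpperTriangular)
    diag_eq_one := blk_apply_self_eq_one (h₁₁.upper_mul_upper_apply_self h₂₁)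
      (h₁₂.upper_mul_upper_apply_self h₂₂)
    lower_mem := by
      rw [blk_mul_transpose_self column₁ column₂]
      exact h₁₁.blk_lower_mem h₁₂ h₂₁ h₂₂ hIB hIG
    upper_mem := by
      rw [transpose_blk_mul_self row₁ row₂]
      exact h₁₁.blk_upper_mem h₁₂ h₂₁ h₂₂ hQJ hGJ }

end RecursiveStep

/-- Theorem 1 (recursive step): from LEU-decompositions of the four intermediate
`n×n` matrices one obtains an LEU-decomposition `(L, E, U)` of the `2n×2n`
matrix `A`, with the blocks of `L`, `E`, `U` given by formulas (13)–(14). -/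
theorem leu_recursive_step {F : Type*} [Field F] {n : ℕ} (hn : 0 < n)
    (I₁ I₂ J₁ J₂ : Matrix (Fin n) (Fin n) F)
    (hI₁ : InD I₁) (hI₂ : InD I₂) (hJ₁ : InD J₁) (hJ₂ : InD J₂)
    (A₁₁ A₁₂ A₂₁ A₂₂ : Matrix (Fin n) (Fin n) F)
    (hA : InFIJ (blk I₁ 0 0 I₂) (blk J₁ 0 0 J₂) (blk A₁₁ A₁₂ A₂₁ A₂₂))
    -- (7): LEU-decomposition of A₁₁
    (L₁₁ E₁₁ U₁₁ : Matrix (Fin n) (Fin n) F)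
    (h11 : IsLEU I₁ J₁ A₁₁ L₁₁ E₁₁ U₁₁)
    -- (8), (9)
    (Q B A'₂₁ A'₁₂ A'₂₂ : Matrix (Fin n) (Fin n) F)
    (hQ : Q = L₁₁ * A₁₂) (hB : B = A₂₁ * U₁₁)
    (h'21 : A'₂₁ = B * (1 - E₁₁ᵀ * E₁₁))
    (h'12 : A'₁₂ = (1 - E₁₁ * E₁₁ᵀ) * Q)
    (h'22 : A'₂₂ = A₂₂ - B * E₁₁ᵀ * Q)
    -- (10): LEU-decompositions of A¹₁₂ and A¹₂₁
    (L₁₂ E₁₂ U₁₂ : Matrix (Fin n) (Fin n) F)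
    (h12 : IsLEU (I₁ * (1 - E₁₁ * E₁₁ᵀ)) J₂ A'₁₂ L₁₂ E₁₂ U₁₂)
    (L₂₁ E₂₁ U₂₁ : Matrix (Fin n) (Fin n) F)
    (h21 : IsLEU I₂ (J₁ * (1 - E₁₁ᵀ * E₁₁)) A'₂₁ L₂₁ E₂₁ U₂₁)
    -- (11)
    (G A''₂₂ : Matrix (Fin n) (Fin n) F)
    (hG : G = L₂₁ * A'₂₂ * U₁₂)
    (h''22 : A''₂₂ = (1 - E₂₁ * E₂₁ᵀ) * G * (1 - E₁₂ᵀ * E₁₂))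
    -- (12): LEU-decomposition of A²₂₂
    (L₂₂ E₂₂ U₂₂ : Matrix (Fin n) (Fin n) F)
    (h22 : IsLEU (I₂ * (1 - E₂₁ * E₂₁ᵀ)) (J₂ * (1 - E₁₂ᵀ * E₁₂)) A''₂₂ L₂₂ E₂₂ U₂₂)
    -- (13)
    (W V : Matrix (Fin n) (Fin n) F)
    (hW : W = G * E₁₂ᵀ * L₁₂ + L₂₁ * B * E₁₁ᵀ)
    (hV : V = U₂₁ * E₂₁ᵀ * G * (1 - E₁₂ᵀ * E₁₂) + E₁₁ᵀ * Q * U₁₂) :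
    -- (14), (15): the assembled triple is an LEU-decomposition of A, and LAU = E
    IsLEU (blk I₁ 0 0 I₂) (blk J₁ 0 0 J₂) (blk A₁₁ A₁₂ A₂₁ A₂₂)
      (blk (L₁₂ * L₁₁) 0 (-(L₂₂ * W * L₁₁)) (L₂₂ * L₂₁))
      (blk E₁₁ E₁₂ E₂₁ E₂₂)
      (blk (U₁₁ * U₂₁) (-(U₁₁ * V * U₂₂)) 0 (U₁₂ * U₂₂)) ∧
    blk (L₁₂ * L₁₁) 0 (-(L₂₂ * W * L₁₁)) (L₂₂ * L₂₁) *
        blk A₁₁ A₁₂ A₂₁ A₂₂ *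
        blk (U₁₁ * U₂₁) (-(U₁₁ * V * U₂₂)) 0 (U₁₂ * U₂₂) =
      blk E₁₁ E₁₂ E₂₁ E₂₂ := by
  subst h'21 h'12 h'22 h''22 hW hV
  obtain ⟨hIA, hAJ⟩ := (mul_mul_eq_self_iff (inD_blk hI₁ hI₂).isIdempotentElem
    (inD_blk hJ₁ hJ₂).isIdempotentElem).mp hA
  obtain ⟨hIA₁₁, hIA₁₂, hIA₂₁, hIA₂₂⟩ := blk_diag_mul_blk_eq_self_iff.mp hIA
  obtain ⟨hAJ₁₁, hAJ₁₂, hAJ₂₁, hAJ₂₂⟩ := blk_mul_blk_diag_eq_self_iff.mp hAJ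
  have c₁₁ := h11.isCornerLEU hI₁ hJ₁ hIA₁₁ hAJ₁₁
  have hIQ : I₁ * Q = Q := hQ ▸ left_mul_mul_eq_of_mem_oneAddCorner c₁₁.lower_mem hIA₁₂
  have hQJ : Q * J₂ = Q := by rw [hQ, mul_assoc, hAJ₁₂]
  have hIB : I₂ * B = B := by rw [hB, ← mul_assoc, hIA₂₁]
  have hBJ : B * J₁ = B := hB ▸ mul_mul_right_eq_of_mem_oneAddCorner c₁₁.upper_mem hAJ₂₁
  have c₁₂ := h12.isCornerLEU (hI₁.mul c₁₁.inP.mul_transpose_self.one_sub) hJ₂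
    (c₁₁.left_compl_mul_compl_mul hIQ) (by rw [mul_assoc, hQJ])
  have c₂₁ := h21.isCornerLEU hI₂ (hJ₁.mul c₁₁.inP.transpose_mul_self.one_sub)
    (by rw [← mul_assoc, hIB]) (c₁₁.mul_compl_mul_right_compl hBJ)
  have hIG : I₂ * G = G := hG ▸ c₂₁.left_mul_schur hIB hIA₂₂
  have hGJ : G * J₂ = G := hG ▸ c₁₂.schur_mul_right hQJ hAJ₂₂
  have c₂₂ := h22.isCornerLEU (hI₂.mul c₂₁.inP.mul_transpose_self.one_sub)
    (hJ₂.mul c₁₂.inP.transpose_mul_self.one_sub)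
    (by rw [← mul_assoc, c₂₁.left_compl_mul_compl_mul hIG])
    (c₁₂.mul_compl_mul_right_compl (by rw [mul_assoc, hGJ]))
  have c := isCornerLEU_blk c₁₁ c₁₂ c₂₁ c₂₂ hQ hB hG hIA hAJ
  exact ⟨c.isLEU, c.mul_mul_eq⟩
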